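/- arXiv:2503.16877 — 2 statements merged into one kernel-verified Lean document; each statement's English description precedes it below -/
import Mathlib

section
/- Fix x ∈ ℝ², let d ∈ {1,2} with d' the other index, and let f : ℝ² → ℝ be 4 times continuously differentiable. For h > 0 and j ∈ ℤ², let A_h(j) = h^{−2} ∫_{x + h j + [0,h]²} f be the cell average, and let B_h = h^{−1} ∫_{F} f dl be the average of f over the face F = { x + h e^d + s h e^{d'} : s ∈ [0,1] } (the higher face of the cell j = 0 in dimension d). Then there exist C > 0 and h₀ > 0 such that for all 0 < h < h₀, | B_h − ( (7/12)(A_h(0) + A_h(e^d)) − (1/12)(A_h(−e^d) + A_h(2e^d)) ) | ≤ C h⁴. -/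
open MeasureTheory

noncomputable section

/-- The square cell of side `h` with multi-index `j` anchored at `x`. -/
def fvCell (x : EuclideanSpace ℝ (Fin 2)) (h : ℝ) (j : Fin 2 → ℤ) :
    Set (EuclideanSpace ℝ (Fin 2)) :=
  {y | ∀ i, y i ∈ Set.Icc (x i + h * (j i : ℝ)) (x i + h * (j i : ℝ) + h)}

/-- The average of `f` over the cell of side `h` and multi-index `j`
anchored at `x`. -/
def cellAvg (f : EuclideanSpace ℝ (Fin 2) → ℝ) (x : EuclideanSpace ℝ (Fin 2))
    (h : ℝ) (j : Fin 2 → ℤ) : ℝ :=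
  (1 / h ^ 2) * ∫ y in fvCell x h j, f y

/-- The average of `f` over the segment from `a` to `b` (equal to `1/|b-a|`
times the one-dimensional Lebesgue integral of `f` along the segment). -/
def segAvg (f : EuclideanSpace ℝ (Fin 2) → ℝ) (a b : EuclideanSpace ℝ (Fin 2)) : ℝ :=
  ∫ s in (0 : ℝ)..1, f (a + s • (b - a))

/-- The `i`-th standard basis vector of ℝ². -/
def ev (i : Fin 2) : EuclideanSpace ℝ (Fin 2) := EuclideanSpace.single i 1

theorem cell_box (f : EuclideanSpace ℝ (Fin 2) → ℝ) (x : EuclideanSpace ℝ (Fin 2))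
    (h : ℝ) (j : Fin 2 → ℤ) :
    ∫ y in fvCell x h j, f y =
     ∫ z in (Set.Icc (x 0 + h * (j 0 : ℝ)) (x 0 + h * (j 0 : ℝ) + h)) ×ˢ
      (Set.Icc (x 1 + h * (j 1 : ℝ)) (x 1 + h * (j 1 : ℝ) + h)), f (WithLp.toLp 2 ![z.1, z.2]) := by
  have h1 := (PiLp.volume_preserving_toLp (Fin 2)).setIntegral_preimage_emb
    (MeasurableEquiv.toLp 2 _).measurableEmbedding f (fvCell x h j)
  have h2 := ((volume_preserving_finTwoArrow ℝ).symm _).setIntegral_preimage_emb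
    (MeasurableEquiv.finTwoArrow).symm.measurableEmbedding (fun v => f (WithLp.toLp 2 v))
    (WithLp.toLp 2 ⁻¹' fvCell x h j)
  rw [← h1, ← h2]
  congr 1
  congr 1
  ext z
  simp only [fvCell, Fin.forall_fin_two, Set.mem_preimage, Set.mem_prod, Set.mem_ofPred_eq]
  rfl

theorem box_int (F : ℝ × ℝ → ℝ) (hF : Continuous F) (p q h : ℝ) (hh : 0 < h) :
    (1 / h ^ 2) * ∫ z in (Set.Icc p (p+h)) ×ˢ (Set.Icc q (q+h)), F z
      = ∫ s in (0:ℝ)..1, ∫ t in (0:ℝ)..1, F (p + h * s, q + h * t) := by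
  rw [Measure.volume_eq_prod, setIntegral_prod _
    (by rw [← Measure.volume_eq_prod]; exact hF.continuousOn.integrableOn_compact (isCompact_Icc.prod isCompact_Icc))]
  rw [integral_Icc_eq_integral_Ioc, ← intervalIntegral.integral_of_le (by linarith)]
  have h1 : ∀ a, ∫ y in Set.Icc q (q+h), F (a, y) = h * ∫ t in (0:ℝ)..1, F (a, q + h * t) := by
    intro a
    rw [integral_Icc_eq_integral_Ioc, ← intervalIntegral.integral_of_le (by linarith)]
    have := intervalIntegral.smul_integral_comp_add_mul (a := 0) (b := 1) (fun y => F (a, y)) h q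
    simp at this
    exact this.symm
  simp_rw [h1]
  have := intervalIntegral.smul_integral_comp_add_mul (a := 0) (b := 1) (fun a => h * ∫ t in (0:ℝ)..1, F (a, q + h * t)) h p
  simp only [smul_eq_mul, mul_zero, mul_one, add_zero] at this
  rw [← this, intervalIntegral.integral_const_mul]
  field_simp

theorem cellAvg_eq (f : EuclideanSpace ℝ (Fin 2) → ℝ) (hf : Continuous f) (x : EuclideanSpace ℝ (Fin 2))
    (d d' : Fin 2) (hdd' : d' ≠ d) (h : ℝ) (hh : 0 < h) (k : ℤ) :
    cellAvg f x h (Pi.single d k) = ∫ s in (0:ℝ)..1, ∫ t in (0:ℝ)..1,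
      f (x + (h * s) • ev d' + (h * (k + t)) • ev d) := by
  unfold cellAvg
  rw [cell_box]
  have hc : Continuous fun z : ℝ × ℝ => f (WithLp.toLp 2 ![z.1, z.2]) := by
    refine hf.comp ((PiLp.continuous_toLp 2 _).comp ?_)
    refine continuous_pi fun i => ?_
    fin_cases i <;> simp <;> fun_prop
  have hd : (d = 0 ∧ d' = 1) ∨ (d = 1 ∧ d' = 0) := by
    revert d d'; decide
  rcases hd with ⟨rfl, rfl⟩ | ⟨rfl, rfl⟩
  · rw [Measure.volume_eq_prod, ← setIntegral_prod_swap, ← Measure.volume_eq_prod,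
      box_int (fun z : ℝ × ℝ => f (WithLp.toLp 2 ![z.swap.1, z.swap.2])) (hc.comp continuous_swap) _ _ _ hh]
    congr! 5 with s t
    ext i
    fin_cases i <;> simp [ev] <;> ring
  · rw [box_int _ hc _ _ _ hh]
    congr! 5 with s t
    ext i
    fin_cases i <;> simp [ev] <;> ring

theorem step (ψ ψ' : ℝ → ℝ) (c R : ℝ) (n : ℕ) (hc : 0 ≤ c) (h0 : ψ 0 = 0) (hd : ∀ u, HasDerivAt ψ (ψ' u) u)
    (hb : ∀ u, 0 ≤ u → u ≤ R → |ψ' u| ≤ c * u ^ n) : 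
    ∀ u, 0 ≤ u → u ≤ R → |ψ u| ≤ c * u ^ (n+1) := by
  intro u hu huR
  have := Convex.norm_image_sub_le_of_norm_hasDerivWithin_le (s := Set.Icc 0 u) (f := ψ) (f' := ψ') (C := c * u ^ n)
    (x := 0) (y := u) (fun v _ => (hd v).hasDerivWithinAt) ?_ (convex_Icc _ _) (by simp [hu]) (by simp [hu])
  · simp only [h0, sub_zero, Real.norm_eq_abs, abs_of_nonneg hu] at this
    rw [pow_succ, ← mul_assoc]; exact this
  · intro v hv
    refine (hb v hv.1 (hv.2.trans huR)).trans ?_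
    have := hv.1
    have := hv.2
    gcongr

theorem symm_taylor (g0 g1 g2 g3 g4 : ℝ → ℝ) (M R : ℝ) (hM : 0 ≤ M)
    (h0 : ∀ u, HasDerivAt g0 (g1 u) u) (h1 : ∀ u, HasDerivAt g1 (g2 u) u)
    (h2 : ∀ u, HasDerivAt g2 (g3 u) u) (h3 : ∀ u, HasDerivAt g3 (g4 u) u)
    (hb : ∀ u, |u| ≤ R → |g4 u| ≤ M) (u : ℝ) (hu : 0 ≤ u) (huR : u ≤ R) :
    |g0 u + g0 (-u) - 2 * g0 0 - g2 0 * u ^ 2| ≤ 2 * M * u ^ 4 := by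
  have neg : ∀ (a b : ℝ → ℝ), (∀ u, HasDerivAt a (b u) u) → ∀ u, HasDerivAt (fun u => a (-u)) (-b (-u)) u := by
    intro a b hab u
    have := (hab (-u)).comp u (hasDerivAt_neg u)
    refine this.congr_deriv ?_
    ring
  have e3 := step (fun u => g3 u - g3 (-u)) (fun u => g4 u - (-g4 (-u))) (2*M) R 0 (by positivity) (by simp)
    (fun u => (h3 u).sub (neg _ _ h3 u)) (by
      intro u hu huR
      have a := hb u (by rwa [abs_of_nonneg hu])
      have b := hb (-u) (by rwa [abs_neg, abs_of_nonneg hu])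
      rw [abs_le] at *
      constructor <;> linarith)
  have e2 := step (fun u => g2 u + g2 (-u) - 2 * g2 0) (fun u => g3 u - g3 (-u)) (2*M) R 1 (by positivity) (by simp; ring)
    (fun u => by simpa [sub_eq_add_neg] using ((h2 u).add (neg _ _ h2 u)).sub_const (2 * g2 0)) e3
  have e1 := step (fun u => g1 u - g1 (-u) - 2 * g2 0 * u) (fun u => g2 u + g2 (-u) - 2 * g2 0) (2*M) R 2 (by positivity) (by simp)
    (fun u => by
      have := ((h1 u).sub (neg _ _ h1 u)).sub ((hasDerivAt_id u).const_mul (2 * g2 0))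
      refine this.congr_deriv ?_
      ring) e2
  have e0 := step (fun u => g0 u + g0 (-u) - 2 * g0 0 - g2 0 * u ^ 2) (fun u => g1 u - g1 (-u) - 2 * g2 0 * u) (2*M) R 3 (by positivity) (by simp; ring)
    (fun u => by
      have := (((h0 u).add (neg _ _ h0 u)).sub_const (2 * g0 0)).sub ((hasDerivAt_pow 2 u).const_mul (g2 0))
      refine this.congr_deriv ?_
      simp; ring) e1
  exact e0 u hu huR

theorem dirD (n : ℕ) (f : EuclideanSpace ℝ (Fin 2) → ℝ) (hf : ContDiff ℝ (n+1 : ℕ) f) (e : EuclideanSpace ℝ (Fin 2)) :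
    ∃ f' : EuclideanSpace ℝ (Fin 2) → ℝ, ContDiff ℝ n f' ∧
      ∀ p, ∀ u : ℝ, HasDerivAt (fun u : ℝ => f (p + u • e)) (f' (p + u • e)) u := by
  refine ⟨fun p => fderiv ℝ f p e, ?_, ?_⟩
  · exact (hf.fderiv_right (m := n) (by norm_cast)).clm_apply contDiff_const
  · intro p u
    have h1 : HasFDerivAt f (fderiv ℝ f (p + u • e)) (p + u • e) :=
      (hf.differentiable (by norm_cast) _).hasFDerivAt
    have h2 : HasDerivAt (fun u : ℝ => p + u • e) e u := by
      simpa using ((hasDerivAt_id u).smul_const e).const_add p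
    exact h1.comp_hasDerivAt u h2

theorem inner_bound (g : ℝ → ℝ) (hg : Continuous g) (a M h : ℝ) (hh : 0 < h) (hM : 0 ≤ M)
    (hT : ∀ u, 0 ≤ u → u ≤ 2 * h → |g u + g (-u) - 2 * g 0 - a * u ^ 2| ≤ 2 * M * u ^ 4) :
    |g 0 - ((7 / 12) * ((∫ t in (0:ℝ)..1, g (h * (t - 1))) + ∫ t in (0:ℝ)..1, g (h * t))
      - (1 / 12) * ((∫ t in (0:ℝ)..1, g (h * (t - 2))) + ∫ t in (0:ℝ)..1, g (h * (1 + t))))|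
      ≤ 4 * M * h ^ 4 := by
  have r1 : (∫ t in (0:ℝ)..1, g (h * (t - 1))) = ∫ t in (0:ℝ)..1, g (-(h * t)) := by
    have := intervalIntegral.integral_comp_sub_left (a := 0) (b := 1) (fun t => g (h * (t - 1))) 1
    simp only [sub_self, sub_zero] at this
    rw [← this]
    congr! 3
    ring
  have r2 : (∫ t in (0:ℝ)..1, g (h * (t - 2))) = ∫ t in (0:ℝ)..1, g (-(h * (1 + t))) := by
    have := intervalIntegral.integral_comp_sub_left (a := 0) (b := 1) (fun t => g (h * (t - 2))) 1
    simp only [sub_self, sub_zero] at this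
    rw [← this]
    congr! 3
    ring
  have ii : ∀ φ : ℝ → ℝ, Continuous φ → IntervalIntegrable φ volume 0 1 :=
    fun φ hφ => hφ.intervalIntegrable _ _
  have hp : ∫ t in (0:ℝ)..1, (-(7 / 12) * t ^ 2 + (1 / 12) * (1 + t) ^ 2) = (0:ℝ) := by
    have : ∀ t : ℝ, (-(7 / 12) * t ^ 2 + (1 / 12) * (1 + t) ^ 2)
        = (-(1/2)) * t ^ 2 + ((1/6) * t + 1/12) := fun t => by ring
    simp_rw [this]
    rw [intervalIntegral.integral_add (ii _ (by fun_prop)) (ii _ (by fun_prop)),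
      intervalIntegral.integral_add (ii _ (by fun_prop)) (ii _ (by fun_prop)),
      intervalIntegral.integral_const_mul, intervalIntegral.integral_const_mul, integral_pow, integral_id]
    norm_num
  have key : g 0 - ((7 / 12) * ((∫ t in (0:ℝ)..1, g (h * (t - 1))) + ∫ t in (0:ℝ)..1, g (h * t))
      - (1 / 12) * ((∫ t in (0:ℝ)..1, g (h * (t - 2))) + ∫ t in (0:ℝ)..1, g (h * (1 + t))))
      = ∫ t in (0:ℝ)..1, (g 0 - ((7 / 12) * (g (-(h * t)) + g (h * t))
          - (1 / 12) * (g (-(h * (1 + t))) + g (h * (1 + t))))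
          - (a * h ^ 2) * (-(7 / 12) * t ^ 2 + (1 / 12) * (1 + t) ^ 2)) := by
    rw [intervalIntegral.integral_sub (ii _ (by fun_prop)) (ii _ (by fun_prop)),
      intervalIntegral.integral_sub (ii _ (by fun_prop)) (ii _ (by fun_prop)),
      intervalIntegral.integral_sub (ii _ (by fun_prop)) (ii _ (by fun_prop)),
      intervalIntegral.integral_const_mul, intervalIntegral.integral_const_mul,
      intervalIntegral.integral_const_mul, hp,
      intervalIntegral.integral_add (ii _ (by fun_prop)) (ii _ (by fun_prop)),
      intervalIntegral.integral_add (ii _ (by fun_prop)) (ii _ (by fun_prop)), r1, r2]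
    simp
  rw [key]
  have := intervalIntegral.norm_integral_le_of_norm_le_const (a := 0) (b := 1) (C := 4 * M * h ^ 4)
    (f := fun t => (g 0 - ((7 / 12) * (g (-(h * t)) + g (h * t))
          - (1 / 12) * (g (-(h * (1 + t))) + g (h * (1 + t))))
          - (a * h ^ 2) * (-(7 / 12) * t ^ 2 + (1 / 12) * (1 + t) ^ 2))) ?_
  · simpa using this
  · intro t ht
    rw [Set.uIoc_of_le zero_le_one] at ht
    have t0 := ht.1.le
    have t1 := ht.2
    have a1 := hT (h * t) (by positivity) (by nlinarith)
    have a2 := hT (h * (1 + t)) (by positivity) (by nlinarith)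
    have b1 : 2 * M * (h * t) ^ 4 ≤ 2 * M * h ^ 4 := by
      gcongr
      nlinarith
    have b2 : 2 * M * (h * (1 + t)) ^ 4 ≤ 2 * M * (h * 2) ^ 4 := by
      gcongr
      linarith
    have a1' := abs_le.1 (a1.trans b1)
    have a2' := abs_le.1 (a2.trans b2)
    have : 0 ≤ M * h ^ 4 := by positivity
    rw [Real.norm_eq_abs, abs_le]
    constructor <;> linarith [a1'.1, a1'.2, a2'.1, a2'.2]

theorem comb (φ a b c e : ℝ → ℝ) (h0 : Continuous φ) (h1 : Continuous a) (h2 : Continuous b)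
    (h3 : Continuous c) (h4 : Continuous e) :
    (∫ s in (0:ℝ)..1, φ s) - ((7 / 12) * ((∫ s in (0:ℝ)..1, a s) + ∫ s in (0:ℝ)..1, b s)
      - (1 / 12) * ((∫ s in (0:ℝ)..1, c s) + ∫ s in (0:ℝ)..1, e s))
    = ∫ s in (0:ℝ)..1, (φ s - ((7 / 12) * (a s + b s) - (1 / 12) * (c s + e s))) := by
  have ii : ∀ φ : ℝ → ℝ, Continuous φ → IntervalIntegrable φ volume 0 1 :=
    fun φ hφ => hφ.intervalIntegrable _ _
  rw [intervalIntegral.integral_sub (ii _ (by fun_prop)) (ii _ (by fun_prop)),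
    intervalIntegral.integral_sub (ii _ (by fun_prop)) (ii _ (by fun_prop)),
    intervalIntegral.integral_const_mul, intervalIntegral.integral_const_mul,
    intervalIntegral.integral_add (ii _ (by fun_prop)) (ii _ (by fun_prop)),
    intervalIntegral.integral_add (ii _ (by fun_prop)) (ii _ (by fun_prop))]

theorem face_interpolation_fourth_order (x : EuclideanSpace ℝ (Fin 2))
    (d d' : Fin 2) (hdd' : d' ≠ d)
    (f : EuclideanSpace ℝ (Fin 2) → ℝ) (hf : ContDiff ℝ 4 f) :
    ∃ C > (0 : ℝ), ∃ h₀ > (0 : ℝ), ∀ h : ℝ, 0 < h → h < h₀ →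
      |segAvg f (x + h • ev d) (x + h • ev d + h • ev d')
        - ((7 / 12) * (cellAvg f x h 0 + cellAvg f x h (Pi.single d 1))
            - (1 / 12) * (cellAvg f x h (Pi.single d (-1)) + cellAvg f x h (Pi.single d 2)))|
        ≤ C * h ^ 4 := by
  obtain ⟨f1, c1, D1⟩ := dirD 3 f (by exact_mod_cast hf) (ev d)
  obtain ⟨f2, c2, D2⟩ := dirD 2 f1 c1 (ev d)
  obtain ⟨f3, c3, D3⟩ := dirD 1 f2 c2 (ev d)
  obtain ⟨f4, c4, D4⟩ := dirD 0 f3 c3 (ev d)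
  have hfc : Continuous f := hf.continuous
  obtain ⟨M, hM⟩ := (isCompact_closedBall x 4).exists_bound_of_continuousOn c4.continuous.continuousOn
  have hM0 : 0 ≤ M := (norm_nonneg _).trans (hM x (by simp))
  have n1 : ∀ i, ‖ev i‖ = 1 := fun i => by simp [ev]
  refine ⟨4 * M + 1, by positivity, 1, one_pos, fun h hh h1 => ?_⟩
  rw [← Pi.single_zero (M := fun _ : Fin 2 => ℤ) d]
  simp only [cellAvg_eq f hfc x d d' hdd' h hh]
  unfold segAvg
  have ic : ∀ k : ℤ, Continuous fun s : ℝ => ∫ t in (0:ℝ)..1, f (x + (h * s) • ev d' + (h * (k + t)) • ev d) := by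
    intro k
    apply intervalIntegral.continuous_parametric_intervalIntegral_of_continuous'
    exact hfc.comp (by fun_prop)
  have sc : Continuous fun s : ℝ => f (x + h • ev d + s • (x + h • ev d + h • ev d' - (x + h • ev d))) :=
    hfc.comp (by fun_prop)
  have i0 := ic 0
  have i1 := ic 1
  have i2 := ic (-1)
  have i3 := ic 2
  rw [comb _ _ _ _ _ sc i0 i1 i2 i3]
  have hpow : 0 ≤ h ^ 4 := by positivity
  refine le_trans ?_ (by linarith : 4 * M * h ^ 4 ≤ (4 * M + 1) * h ^ 4)
  rw [← Real.norm_eq_abs]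
  refine (intervalIntegral.norm_integral_le_of_norm_le_const (C := 4 * M * h ^ 4) ?_).trans (by simp)
  intro s hs
  rw [Set.uIoc_of_le zero_le_one] at hs
  have s0 := hs.1.le
  have s1 := hs.2
  set p := x + h • ev d + (h * s) • ev d' with hp
  have hI := inner_bound (fun u => f (p + u • ev d)) (hfc.comp (by fun_prop)) (f2 p) M h hh hM0 (by
    intro u hu huR
    have := symm_taylor _ _ _ _ _ M 2 hM0 (D1 p) (D2 p) (D3 p) (D4 p) (by
      intro v hv
      refine hM _ ?_
      rw [mem_closedBall_iff_norm, hp]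
      have e : x + h • ev d + (h * s) • ev d' + v • ev d - x = h • ev d + (h * s) • ev d' + v • ev d := by abel
      rw [e]
      refine (norm_add₃_le).trans ?_
      simp only [norm_smul, n1, Real.norm_eq_abs, abs_mul, abs_of_pos hh, abs_of_nonneg s0]
      nlinarith) u hu (by linarith)
    simpa using this)
  rw [Real.norm_eq_abs]
  have q : ∀ c c' : ℝ, c = c' + h → x + (h * s) • ev d' + c • ev d = p + c' • ev d := by
    intro c c' hc
    rw [hc, hp, add_smul]; abel
  have qs : x + h • ev d + s • (x + h • ev d + h • ev d' - (x + h • ev d)) = p + (0:ℝ) • ev d := by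
    rw [hp, add_sub_cancel_left, smul_smul, mul_comm s h, zero_smul, add_zero]
  have q0 : ∀ t : ℝ, x + (h * s) • ev d' + (h * (((0:ℤ):ℝ) + t)) • ev d = p + (h * (t - 1)) • ev d :=
    fun t => q _ _ (by push_cast; ring)
  have q1 : ∀ t : ℝ, x + (h * s) • ev d' + (h * (((1:ℤ):ℝ) + t)) • ev d = p + (h * t) • ev d :=
    fun t => q _ _ (by push_cast; ring)
  have q2 : ∀ t : ℝ, x + (h * s) • ev d' + (h * (((-1:ℤ):ℝ) + t)) • ev d = p + (h * (t - 2)) • ev d :=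
    fun t => q _ _ (by push_cast; ring)
  have q3 : ∀ t : ℝ, x + (h * s) • ev d' + (h * (((2:ℤ):ℝ) + t)) • ev d = p + (h * (1 + t)) • ev d :=
    fun t => q _ _ (by push_cast; ring)
  simp only [q0, q1, q2, q3, qs]
  exact hI
end
end

section
/- Fix x ∈ ℝ². Let ρ : ℝ² → ℝ and u = (u₁, u₂) : ℝ² → ℝ² be 5 times continuously differentiable with div u = ∂u₁/∂x₁ + ∂u₂/∂x₂ = 0 everywhere. For h > 0, d ∈ {1,2} with d' the other index, and a sign ±, let F^{d,±} denote the higher (+) or lower (−) face of the cell x + [0,h]² in dimension d, let R^{d,±} = h^{−1} ∫_{F^{d,±}} ρ dl and U^{d,±} = h^{−1} ∫_{F^{d,±}} u_d dl be exact face averages, and let Gρ^{d,±} (resp. Gu^{d,±}) be (1/(2h)) times the difference of the face averages of ρ (resp. of u_d) over the two faces obtained by translating F^{d,±} by +h e^{d'} and −h e^{d'}. Then there exist C > 0 and h₀ > 0 such that for all 0 < h < h₀, | (1/h) Σ_{d=1,2} Σ_{±} ± ( R^{d,±} U^{d,±} + (h²/12) Gρ^{d,±} Gu^{d,±} ) −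 h^{−2} ∫_{x + [0,h]²} (u · ∇ρ) | ≤ C h⁴. -/
open MeasureTheory

noncomputable section

/-- The other index of `d` in `Fin 2`. -/
def otherIdx (d : Fin 2) : Fin 2 := if d = 0 then 1 else 0

/-- The centered transverse difference of face averages of `g`: `1/(2h)` times
the difference of the averages of `g` over the translates of the face with
endpoints `a, b` by `+h e^{d'}` and `-h e^{d'}`. -/
def Gperp (g : EuclideanSpace ℝ (Fin 2) → ℝ) (h : ℝ) (d' : Fin 2)
    (a b : EuclideanSpace ℝ (Fin 2)) : ℝ :=
  (segAvg g (a + h • ev d') (b + h • ev d') - segAvg g (a - h • ev d') (b - h • ev d'))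
    / (2 * h)


/-- one-dimensional flux defect -/
def Bq (φ ψ : ℝ → ℝ) (h : ℝ) : ℝ :=
  (∫ s in (0:ℝ)..1, φ (h * s)) * (∫ s in (0:ℝ)..1, ψ (h * s))
  + 1 / 48 * ((∫ s in (0:ℝ)..1, φ (h * s + h)) - ∫ s in (0:ℝ)..1, φ (h * s - h))
    * ((∫ s in (0:ℝ)..1, ψ (h * s + h)) - ∫ s in (0:ℝ)..1, ψ (h * s - h))
  - ∫ s in (0:ℝ)..1, φ (h * s) * ψ (h * s)

lemma int_bound (f : ℝ → ℝ) (K : ℝ) (hf : ∀ s ∈ Set.Icc (0:ℝ) 1, |f s| ≤ K) :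
    |∫ s in (0:ℝ)..1, f s| ≤ K := by
  have := intervalIntegral.norm_integral_le_of_norm_le_const (a := (0:ℝ)) (b := 1) (f := f) (C := K)
    (fun s hs => by
      rw [Set.uIoc_of_le zero_le_one] at hs
      exact hf s ⟨hs.1.le, hs.2⟩)
  simpa using this

lemma Bq_trivial (φ ψ : ℝ → ℝ) (h α β : ℝ) (h0 : 0 < h)
    (hφ : ∀ s ∈ Set.Icc (-h) (2*h), |φ s| ≤ α) (hψ : ∀ s ∈ Set.Icc (-h) (2*h), |ψ s| ≤ β) :
    |Bq φ ψ h| ≤ 3 * (α * β) := by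
  have hα : 0 ≤ α := (abs_nonneg _).trans (hφ 0 ⟨by linarith, by linarith⟩)
  have hβ : 0 ≤ β := (abs_nonneg _).trans (hψ 0 ⟨by linarith, by linarith⟩)
  have m0 : ∀ s ∈ Set.Icc (0:ℝ) 1, h * s ∈ Set.Icc (-h) (2*h) := fun s hs =>
    ⟨by nlinarith [hs.1, hs.2], by nlinarith [hs.1, hs.2]⟩
  have m1 : ∀ s ∈ Set.Icc (0:ℝ) 1, h * s + h ∈ Set.Icc (-h) (2*h) := fun s hs =>
    ⟨by nlinarith [hs.1, hs.2], by nlinarith [hs.1, hs.2]⟩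
  have m2 : ∀ s ∈ Set.Icc (0:ℝ) 1, h * s - h ∈ Set.Icc (-h) (2*h) := fun s hs =>
    ⟨by nlinarith [hs.1, hs.2], by nlinarith [hs.1, hs.2]⟩
  have a0 := int_bound (fun s => φ (h * s)) α (fun s hs => hφ _ (m0 s hs))
  have a1 := int_bound (fun s => φ (h * s + h)) α (fun s hs => hφ _ (m1 s hs))
  have a2 := int_bound (fun s => φ (h * s - h)) α (fun s hs => hφ _ (m2 s hs))
  have b0 := int_bound (fun s => ψ (h * s)) β (fun s hs => hψ _ (m0 s hs))
  have b1 := int_bound (fun s => ψ (h * s + h)) β (fun s hs => hψ _ (m1 s hs))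
  have b2 := int_bound (fun s => ψ (h * s - h)) β (fun s hs => hψ _ (m2 s hs))
  have c0 := int_bound (fun s => φ (h * s) * ψ (h * s)) (α * β) (fun s hs => by
    rw [abs_mul]
    exact mul_le_mul (hφ _ (m0 s hs)) (hψ _ (m0 s hs)) (abs_nonneg _) hα)
  unfold Bq
  generalize (∫ s in (0:ℝ)..1, φ (h * s)) = A0 at *
  generalize (∫ s in (0:ℝ)..1, φ (h * s + h)) = A1 at *
  generalize (∫ s in (0:ℝ)..1, φ (h * s - h)) = A2 at *
  generalize (∫ s in (0:ℝ)..1, ψ (h * s)) = B0 at *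
  generalize (∫ s in (0:ℝ)..1, ψ (h * s + h)) = B1 at *
  generalize (∫ s in (0:ℝ)..1, ψ (h * s - h)) = B2 at *
  generalize (∫ s in (0:ℝ)..1, φ (h * s) * ψ (h * s)) = C0 at *
  have d0 : |A0 * B0| ≤ α * β := by
    rw [abs_mul]; exact mul_le_mul a0 b0 (abs_nonneg _) hα
  have d1 : |(A1 - A2) * (B1 - B2)| ≤ (2 * α) * (2 * β) := by
    rw [abs_mul]
    exact mul_le_mul ((abs_sub _ _).trans (by linarith)) ((abs_sub _ _).trans (by linarith))
      (abs_nonneg _) (by linarith)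
  have := mul_nonneg hα hβ
  rw [abs_le] at *
  constructor <;> nlinarith

lemma Bq_add_left (φ φ' ψ : ℝ → ℝ) (h : ℝ) (h1 : Continuous φ) (h2 : Continuous φ')
    (h3 : Continuous ψ) : Bq (fun s => φ s + φ' s) ψ h = Bq φ ψ h + Bq φ' ψ h := by
  unfold Bq
  have e : ∀ s, (φ (h * s) + φ' (h * s)) * ψ (h * s)
    = φ (h * s) * ψ (h * s) + φ' (h * s) * ψ (h * s) := fun s => by ring
  simp only [e]
  rw [intervalIntegral.integral_add (Continuous.intervalIntegrable (by fun_prop) _ _)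
      (Continuous.intervalIntegrable (by fun_prop) _ _),
    intervalIntegral.integral_add (Continuous.intervalIntegrable (by fun_prop) _ _)
      (Continuous.intervalIntegrable (by fun_prop) _ _),
    intervalIntegral.integral_add (Continuous.intervalIntegrable (by fun_prop) _ _)
      (Continuous.intervalIntegrable (by fun_prop) _ _),
    intervalIntegral.integral_add (Continuous.intervalIntegrable (by fun_prop) _ _)
      (Continuous.intervalIntegrable (by fun_prop) _ _)]
  ring

lemma Bq_symm (φ ψ : ℝ → ℝ) (h : ℝ) : Bq φ ψ h = Bq ψ φ h := by
  unfold Bq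
  have e : ∀ s, φ (h * s) * ψ (h * s) = ψ (h * s) * φ (h * s) := fun s => by ring
  simp only [e]
  ring

lemma int_poly (a b c d e f g : ℝ) :
    ∫ s in (0:ℝ)..1, (a + b * s + c * s^2 + d * s^3 + e * s^4 + f * s^5 + g * s^6)
     = a + b / 2 + c / 3 + d / 4 + e / 5 + f / 6 + g / 7 := by
  have hd : ∀ s ∈ Set.uIcc (0:ℝ) 1, HasDerivAt (fun s => a * s + b / 2 * s^2 + c / 3 * s^3
      + d / 4 * s^4 + e / 5 * s^5 + f / 6 * s^6 + g / 7 * s^7)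
      (a + b * s + c * s^2 + d * s^3 + e * s^4 + f * s^5 + g * s^6) s := by
    intro s _
    have := ((((((((hasDerivAt_id s).const_mul a).add ((hasDerivAt_pow 2 s).const_mul (b/2))).add
      ((hasDerivAt_pow 3 s).const_mul (c/3))).add ((hasDerivAt_pow 4 s).const_mul (d/4))).add
      ((hasDerivAt_pow 5 s).const_mul (e/5))).add ((hasDerivAt_pow 6 s).const_mul (f/6))).add
      ((hasDerivAt_pow 7 s).const_mul (g/7)))
    refine this.congr_deriv ?_
    norm_num
    ring
  rw [intervalIntegral.integral_eq_sub_of_hasDerivAt hd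
    (Continuous.intervalIntegrable (by fun_prop) _ _)]
  norm_num

lemma Bq_poly (p0 p1 p2 p3 q0 q1 q2 q3 h : ℝ) :
    Bq (fun s => p0 + p1 * s + p2 * s^2 + p3 * s^3) (fun s => q0 + q1 * s + q2 * s^2 + q3 * s^3) h
     = h^4 * ((1/8+8/48-1/5) * (p1 * q3 + p3 * q1) + (1/9+1/12-1/5) * (p2 * q2)
        + (1/12+1/6-1/6) * (h * (p2 * q3 + p3 * q2)) + (1/16+1/3-1/7) * (h^2 * (p3 * q3))) := by
  unfold Bq
  have i1 : ∀ a b c d : ℝ, (∫ s in (0:ℝ)..1, (a + b * (h * s) + c * (h * s)^2 + d * (h * s)^3))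
     = a + (b * h) / 2 + (c * h^2) / 3 + (d * h^3) / 4 := by
    intro a b c d
    have := int_poly a (b * h) (c * h^2) (d * h^3) 0 0 0
    rw [show a + (b * h) / 2 + (c * h^2) / 3 + (d * h^3) / 4 = a + b * h / 2 + c * h ^ 2 / 3 + d * h ^ 3 / 4 + 0 / 5 + 0 / 6 + 0 / 7 by ring, ← this]
    congr 1; ext s; ring
  have i2 : ∀ a b c d k : ℝ, (∫ s in (0:ℝ)..1, (a + b * (h * s + k) + c * (h * s + k)^2 + d * (h * s + k)^3))
     = (a + b * k + c * k^2 + d * k^3) + ((b + 2 * c * k + 3 * d * k^2) * h) / 2 + ((c + 3 * d * k) * h^2) / 3 + (d * h^3) / 4 := by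
    intro a b c d k
    rw [← i1]
    congr 1; ext s; ring
  have i3 : ∀ a b c d : ℝ, (∫ s in (0:ℝ)..1, (a + b * (h * s - h) + c * (h * s - h)^2 + d * (h * s - h)^3))
     = (a + b * (-h) + c * (-h)^2 + d * (-h)^3) + ((b + 2 * c * (-h) + 3 * d * (-h)^2) * h) / 2 + ((c + 3 * d * (-h)) * h^2) / 3 + (d * h^3) / 4 := by
    intro a b c d
    rw [← i2]
    congr 1
  have i4 : (∫ s in (0:ℝ)..1, (p0 + p1 * (h * s) + p2 * (h * s)^2 + p3 * (h * s)^3) * (q0 + q1 * (h * s) + q2 * (h * s)^2 + q3 * (h * s)^3))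
    = p0 * q0 + ((p0*q1+p1*q0) * h) / 2 + ((p0*q2+p1*q1+p2*q0) * h^2) / 3 + ((p0*q3+p1*q2+p2*q1+p3*q0)*h^3)/4 + ((p1*q3+p2*q2+p3*q1)*h^4)/5 + ((p2*q3+p3*q2)*h^5)/6 + ((p3*q3)*h^6)/7 := by
    rw [← int_poly]
    congr 1; ext s; ring
  simp only [i1, i2, i3, i4]
  ring

lemma step_bound (r r' : ℝ → ℝ) (h K : ℝ) (h0 : 0 < h) (hr : ∀ s, HasDerivAt r (r' s) s)
    (r0 : r 0 = 0) (hK : ∀ s ∈ Set.Icc (-h) (2*h), |r' s| ≤ K) :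
    ∀ s ∈ Set.Icc (-h) (2*h), |r s| ≤ 2 * h * K := by
  intro s hs
  have z : (0:ℝ) ∈ Set.Icc (-h) (2*h) := ⟨by linarith, by linarith⟩
  have := Convex.norm_image_sub_le_of_norm_hasDerivWithin_le (f := r) (f' := r') (C := K)
    (fun x _ => (hr x).hasDerivWithinAt) hK (convex_Icc (-h) (2*h)) z hs
  have hK0 : 0 ≤ K := (abs_nonneg _).trans (hK 0 z)
  rw [r0] at this
  simp only [sub_zero, Real.norm_eq_abs] at this
  have : |s| ≤ 2 * h := abs_le.2 ⟨by linarith [hs.1], hs.2⟩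
  nlinarith

lemma taylor4 (φ : ℕ → ℝ → ℝ) (h M : ℝ) (h0 : 0 < h)
    (hφ : ∀ j < 4, ∀ s, HasDerivAt (φ j) (φ (j+1) s) s)
    (hM : ∀ s ∈ Set.Icc (-h) (2*h), |φ 4 s| ≤ M) :
    ∀ s ∈ Set.Icc (-h) (2*h),
      |φ 0 s - (φ 0 0 + φ 1 0 * s + φ 2 0 / 2 * s^2 + φ 3 0 / 6 * s^3)| ≤ 16 * M * h^4 := by
  have e3 := step_bound (fun s => φ 3 s - φ 3 0) (φ 4) h M h0
    (fun s => (hφ 3 (by norm_num) s).sub_const _) (by simp) hM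
  have e2 := step_bound (fun s => φ 2 s - (φ 2 0 + φ 3 0 * s)) (fun s => φ 3 s - φ 3 0) h _ h0
    (fun s => by
      refine ((hφ 2 (by norm_num) s).sub (((hasDerivAt_id s).const_mul (φ 3 0)).const_add (φ 2 0))).congr_deriv ?_
      simp) (by simp) e3
  have e1 := step_bound (fun s => φ 1 s - (φ 1 0 + φ 2 0 * s + φ 3 0 / 2 * s^2))
    (fun s => φ 2 s - (φ 2 0 + φ 3 0 * s)) h _ h0
    (fun s => by
      refine ((hφ 1 (by norm_num) s).sub ((((hasDerivAt_id s).const_mul (φ 2 0)).const_add (φ 1 0)).add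
        ((hasDerivAt_pow 2 s).const_mul (φ 3 0 / 2)))).congr_deriv ?_
      norm_num; ring) (by simp) e2
  have e0 := step_bound (fun s => φ 0 s - (φ 0 0 + φ 1 0 * s + φ 2 0 / 2 * s^2 + φ 3 0 / 6 * s^3))
    (fun s => φ 1 s - (φ 1 0 + φ 2 0 * s + φ 3 0 / 2 * s^2)) h _ h0
    (fun s => by
      refine ((hφ 0 (by norm_num) s).sub (((((hasDerivAt_id s).const_mul (φ 1 0)).const_add (φ 0 0)).add
        ((hasDerivAt_pow 2 s).const_mul (φ 2 0 / 2))).add ((hasDerivAt_pow 3 s).const_mul (φ 3 0 / 6)))).congr_deriv ?_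
      norm_num; ring) (by simp) e1
  intro s hs
  refine (e0 s hs).trans (le_of_eq (by ring))

lemma Bq_bound (φ ψ : ℕ → ℝ → ℝ) (h M N : ℝ) (h0 : 0 < h) (h1 : h ≤ 1)
    (hφ : ∀ j < 4, ∀ s, HasDerivAt (φ j) (φ (j+1) s) s)
    (hψ : ∀ j < 4, ∀ s, HasDerivAt (ψ j) (ψ (j+1) s) s)
    (hM : ∀ j ≤ 4, ∀ s ∈ Set.Icc (-h) (2*h), |φ j s| ≤ M)
    (hN : ∀ j ≤ 4, ∀ s ∈ Set.Icc (-h) (2*h), |ψ j s| ≤ N) :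
    |Bq (φ 0) (ψ 0) h| ≤ 400 * (M * N) * h^4 := by
  have z : (0:ℝ) ∈ Set.Icc (-h) (2*h) := ⟨by linarith, by linarith⟩
  have M0 : 0 ≤ M := (abs_nonneg _).trans (hM 0 (by norm_num) 0 z)
  have N0 : 0 ≤ N := (abs_nonneg _).trans (hN 0 (by norm_num) 0 z)
  have MN0 := mul_nonneg M0 N0
  set p : ℝ → ℝ := fun s => φ 0 0 + φ 1 0 * s + φ 2 0 / 2 * s^2 + φ 3 0 / 6 * s^3 with hp
  set q : ℝ → ℝ := fun s => ψ 0 0 + ψ 1 0 * s + ψ 2 0 / 2 * s^2 + ψ 3 0 / 6 * s^3 with hq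
  have cφ : Continuous (φ 0) := continuous_iff_continuousAt.2 fun s => (hφ 0 (by norm_num) s).continuousAt
  have cψ : Continuous (ψ 0) := continuous_iff_continuousAt.2 fun s => (hψ 0 (by norm_num) s).continuousAt
  have cp : Continuous p := by fun_prop
  have cq : Continuous q := by fun_prop
  have tφ := taylor4 φ h M h0 hφ (hM 4 le_rfl)
  have tψ := taylor4 ψ h N h0 hψ (hN 4 le_rfl)
  have dec : Bq (φ 0) (ψ 0) h = Bq p q h + Bq (fun s => φ 0 s - p s) (ψ 0) h
      + Bq p (fun s => ψ 0 s - q s) h := by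
    have x1 := Bq_add_left (fun s => φ 0 s - p s) p (ψ 0) h (by fun_prop) cp cψ
    have x2 := Bq_add_left (fun s => ψ 0 s - q s) q p h (by fun_prop) cq cp
    simp only [sub_add_cancel] at x1 x2
    rw [Bq_symm p, Bq_symm p, add_right_comm, ← add_comm (Bq (fun s => ψ 0 s - q s) p h), ← x2, x1,
      Bq_symm p]
    exact add_comm _ _
  have bp : ∀ s ∈ Set.Icc (-h) (2*h), |p s| ≤ 7 * M := by
    intro s hs
    have hs2 : |s| ≤ 2 := abs_le.2 ⟨by linarith [hs.1], by linarith [hs.2]⟩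
    have g0 := hM 0 (by norm_num) 0 z
    have g1 : |φ 1 0 * s| ≤ M * 2 := by
      rw [abs_mul]; exact mul_le_mul (hM 1 (by norm_num) 0 z) hs2 (abs_nonneg _) M0
    have g2 : |φ 2 0 * s^2| ≤ M * 2^2 := by
      rw [abs_mul, abs_pow]; exact mul_le_mul (hM 2 (by norm_num) 0 z) (by gcongr) (by positivity) M0
    have g3 : |φ 3 0 * s^3| ≤ M * 2^3 := by
      rw [abs_mul, abs_pow]; exact mul_le_mul (hM 3 (by norm_num) 0 z) (by gcongr) (by positivity) M0
    rw [abs_le] at *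
    simp only [hp]
    constructor <;> linarith
  have r1 := Bq_trivial (fun s => φ 0 s - p s) (ψ 0) h _ _ h0 tφ (hN 0 (by norm_num))
  have r2 := Bq_trivial p (fun s => ψ 0 s - q s) h _ _ h0 bp tψ
  have r0 : |Bq p q h| ≤ h^4 * (6 * (M * N)) := by
    rw [hp, hq, Bq_poly, abs_mul, abs_of_pos (by positivity : 0 < h^4)]
    refine mul_le_mul_of_nonneg_left ?_ (by positivity)
    have g : ∀ i ≤ 4, ∀ j ≤ 4, |φ i 0 * ψ j 0| ≤ M * N := fun i hi j hj => by
      rw [abs_mul]; exact mul_le_mul (hM i hi 0 z) (hN j hj 0 z) (abs_nonneg _) M0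
    have gh : ∀ i ≤ 4, ∀ j ≤ 4, ∀ k : ℕ, |h^k * (φ i 0 * ψ j 0)| ≤ M * N := fun i hi j hj k => by
      rw [abs_mul, abs_of_pos (by positivity : 0 < h^k), ← one_mul (M * N)]
      exact mul_le_mul (pow_le_one₀ h0.le h1) (g i hi j hj) (abs_nonneg _) zero_le_one
    have k1 := gh 1 (by norm_num) 3 (by norm_num) 0
    have k2 := gh 3 (by norm_num) 1 (by norm_num) 0
    have k3 := gh 2 (by norm_num) 2 (by norm_num) 0
    have k4 := gh 2 (by norm_num) 3 (by norm_num) 1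
    have k5 := gh 3 (by norm_num) 2 (by norm_num) 1
    have k6 := gh 3 (by norm_num) 3 (by norm_num) 2
    rw [abs_le] at *
    constructor <;> linarith
  rw [dec]
  refine (abs_add_three _ _ _).trans ?_
  have : 0 ≤ M * N * h^4 := by positivity
  nlinarith

/-- directional derivative -/
def Dir (w : EuclideanSpace ℝ (Fin 2)) (f : EuclideanSpace ℝ (Fin 2) → ℝ) :
    EuclideanSpace ℝ (Fin 2) → ℝ := fun y => fderiv ℝ f y w

/-- iterated directional derivative -/
def DirN (w : EuclideanSpace ℝ (Fin 2)) (f : EuclideanSpace ℝ (Fin 2) → ℝ) :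
    ℕ → EuclideanSpace ℝ (Fin 2) → ℝ
  | 0 => f
  | (n+1) => Dir w (DirN w f n)

lemma Dir_contDiff (w : EuclideanSpace ℝ (Fin 2)) (f : EuclideanSpace ℝ (Fin 2) → ℝ) (n : ℕ)
    (hf : ContDiff ℝ (n+1 : ℕ) f) : ContDiff ℝ n (Dir w f) := by
  have : ContDiff ℝ n (fderiv ℝ f) := hf.fderiv_right (by norm_cast)
  exact this.clm_apply contDiff_const

lemma DirN_contDiff (w : EuclideanSpace ℝ (Fin 2)) (f : EuclideanSpace ℝ (Fin 2) → ℝ) (m : ℕ)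
    (hf : ContDiff ℝ m f) : ∀ j n : ℕ, n + j = m → ContDiff ℝ n (DirN w f j) := by
  intro j
  induction j with
  | zero => intro n hn; subst hn; exact hf
  | succ j ih => intro n hn; exact Dir_contDiff w _ n (ih (n+1) (by omega))

lemma DirN_C1 (w : EuclideanSpace ℝ (Fin 2)) (f : EuclideanSpace ℝ (Fin 2) → ℝ)
    (hf : ContDiff ℝ 5 f) (j : ℕ) (hj : j ≤ 4) : ContDiff ℝ 1 (DirN w f j) := by
  have := DirN_contDiff w f 5 (by exact_mod_cast hf) j (5 - j) (by omega)
  exact this.of_le (by exact_mod_cast (by omega : 1 ≤ 5 - j))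

lemma DirN_line (w : EuclideanSpace ℝ (Fin 2)) (f : EuclideanSpace ℝ (Fin 2) → ℝ)
    (hf : ContDiff ℝ 5 f) (y : EuclideanSpace ℝ (Fin 2)) (j : ℕ) (hj : j < 4) (s : ℝ) :
    HasDerivAt (fun s : ℝ => DirN w f j (y + s • w)) (DirN w f (j+1) (y + s • w)) s := by
  have h1 := ((DirN_C1 w f hf j hj.le).differentiable one_ne_zero (y + s • w)).hasFDerivAt
  have h2 : HasDerivAt (fun s : ℝ => y + s • w) w s := by
    simpa using ((hasDerivAt_id s).smul_const w).const_add y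
  exact h1.comp_hasDerivAt s h2

lemma DirN_bounds (w x : EuclideanSpace ℝ (Fin 2)) (f : EuclideanSpace ℝ (Fin 2) → ℝ)
    (hf : ContDiff ℝ 5 f) : ∃ M : ℝ, 0 ≤ M ∧ ∀ j ≤ 4, ∀ z ∈ Metric.closedBall x 10,
      |DirN w f j z| ≤ M ∧ ‖fderiv ℝ (DirN w f j) z‖ ≤ M := by
  have key : ∀ j, ∃ M : ℝ, 0 ≤ M ∧ (j ≤ 4 → ∀ z ∈ Metric.closedBall x 10,
      |DirN w f j z| ≤ M ∧ ‖fderiv ℝ (DirN w f j) z‖ ≤ M) := by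
    intro j
    by_cases hj : j ≤ 4
    · have c := DirN_C1 w f hf j hj
      obtain ⟨A, hA⟩ := (isCompact_closedBall x 10).exists_bound_of_continuousOn
        (f := DirN w f j) c.continuous.continuousOn
      obtain ⟨B, hB⟩ := (isCompact_closedBall x 10).exists_bound_of_continuousOn
        (f := fderiv ℝ (DirN w f j)) (c.continuous_fderiv one_ne_zero).continuousOn
      refine ⟨max 0 (max A B), le_max_left _ _, fun _ z hz => ⟨?_, ?_⟩⟩
      · exact (hA z hz).trans ((le_max_left _ _).trans (le_max_right _ _))
      · exact (hB z hz).trans ((le_max_right _ _).trans (le_max_right _ _))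
    · exact ⟨0, le_rfl, fun h => absurd h hj⟩
  choose M hM0 hM using key
  refine ⟨∑ i ∈ Finset.range 5, M i, Finset.sum_nonneg fun i _ => hM0 i, fun j hj z hz => ?_⟩
  have : M j ≤ ∑ i ∈ Finset.range 5, M i :=
    Finset.single_le_sum (f := M) (fun i _ => hM0 i) (Finset.mem_range.2 (by omega))
  exact ⟨(hM j hj z hz).1.trans this, (hM j hj z hz).2.trans this⟩

lemma defect_diff (x v w : EuclideanSpace ℝ (Fin 2)) (hv : ‖v‖ = 1) (hw : ‖w‖ = 1)
    (f g : EuclideanSpace ℝ (Fin 2) → ℝ) (hf : ContDiff ℝ 5 f) (hg : ContDiff ℝ 5 g) :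
    ∃ C : ℝ, 0 ≤ C ∧ ∀ h : ℝ, 0 < h → h ≤ 1 →
      |Bq (fun s => f (x + h • v + s • w)) (fun s => g (x + h • v + s • w)) h
        - Bq (fun s => f (x + s • w)) (fun s => g (x + s • w)) h| ≤ C * h^5 := by
  obtain ⟨M, M0, hM⟩ := DirN_bounds w x f hf
  obtain ⟨N, N0, hN⟩ := DirN_bounds w x g hg
  refine ⟨800 * (M * N), by positivity, fun h h0 h1 => ?_⟩
  have mem : ∀ s ∈ Set.Icc (-h) (2*h), x + s • w ∈ Metric.closedBall x 10 := by
    intro s hs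
    have : |s| ≤ 2 := abs_le.2 ⟨by linarith [hs.1], by linarith [hs.2]⟩
    rw [mem_closedBall_iff_norm, add_sub_cancel_left, norm_smul, hw, Real.norm_eq_abs]
    linarith
  have mem' : ∀ s ∈ Set.Icc (-h) (2*h), x + h • v + s • w ∈ Metric.closedBall x 10 := by
    intro s hs
    have : |s| ≤ 2 := abs_le.2 ⟨by linarith [hs.1], by linarith [hs.2]⟩
    rw [mem_closedBall_iff_norm, add_assoc, add_sub_cancel_left]
    refine (norm_add_le _ _).trans ?_
    rw [norm_smul, norm_smul, hw, hv, Real.norm_eq_abs, Real.norm_eq_abs, abs_of_pos h0]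
    linarith
  have diffb : ∀ (k : EuclideanSpace ℝ (Fin 2) → ℝ) (K : ℝ), ContDiff ℝ 5 k →
      (∀ j ≤ 4, ∀ z ∈ Metric.closedBall x 10,
        |DirN w k j z| ≤ K ∧ ‖fderiv ℝ (DirN w k j) z‖ ≤ K) →
      ∀ j ≤ 4, ∀ s ∈ Set.Icc (-h) (2*h),
        |DirN w k j (x + h • v + s • w) - DirN w k j (x + s • w)| ≤ h * K := by
    intro k K hk hK j hj s hs
    have := Convex.norm_image_sub_le_of_norm_fderiv_le (𝕜 := ℝ) (f := DirN w k j) (C := K)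
      (fun z _ => (DirN_C1 w k hk j hj).differentiable one_ne_zero z)
      (fun z hz => (hK j hj z hz).2) (convex_closedBall x 10) (mem s hs) (mem' s hs)
    rw [show x + h • v + s • w - (x + s • w) = h • v by abel, norm_smul, hv, Real.norm_eq_abs,
      Real.norm_eq_abs, abs_of_pos h0] at this
    linarith
  have L1 := Bq_bound (fun j s => DirN w f j (x + h • v + s • w) - DirN w f j (x + s • w))
    (fun j s => DirN w g j (x + h • v + s • w)) h (h * M) N h0 h1
    (fun j hj s => (DirN_line w f hf (x + h • v) j hj s).sub (DirN_line w f hf x j hj s))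
    (fun j hj s => DirN_line w g hg (x + h • v) j hj s)
    (diffb f M hf hM) (fun j hj s hs => (hN j hj _ (mem' s hs)).1)
  have L2 := Bq_bound (fun j s => DirN w g j (x + h • v + s • w) - DirN w g j (x + s • w))
    (fun j s => DirN w f j (x + s • w)) h (h * N) M h0 h1
    (fun j hj s => (DirN_line w g hg (x + h • v) j hj s).sub (DirN_line w g hg x j hj s))
    (fun j hj s => DirN_line w f hf x j hj s)
    (diffb g N hg hN) (fun j hj s hs => (hM j hj _ (mem s hs)).1)
  simp only [DirN] at L1 L2
  have cf := hf.continuous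
  have cg := hg.continuous
  have x1 := Bq_add_left (fun s => f (x + h • v + s • w) - f (x + s • w)) (fun s => f (x + s • w))
    (fun s => g (x + h • v + s • w)) h (by fun_prop) (by fun_prop) (by fun_prop)
  have x2 := Bq_add_left (fun s => g (x + h • v + s • w) - g (x + s • w)) (fun s => g (x + s • w))
    (fun s => f (x + s • w)) h (by fun_prop) (by fun_prop) (by fun_prop)
  simp only [sub_add_cancel] at x1 x2
  rw [x1, Bq_symm (fun s => f (x + s • w)), x2, Bq_symm (fun s => f (x + s • w))]
  rw [abs_le] at *
  constructor <;> nlinarith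

lemma segAvg_line (f : EuclideanSpace ℝ (Fin 2) → ℝ) (y w : EuclideanSpace ℝ (Fin 2)) (h : ℝ) :
    segAvg f y (y + h • w) = ∫ s in (0:ℝ)..1, f (y + (h * s) • w) := by
  unfold segAvg
  congr 1; ext s
  rw [add_sub_cancel_left, smul_smul, mul_comm]

lemma flux_eq (f g : EuclideanSpace ℝ (Fin 2) → ℝ) (y : EuclideanSpace ℝ (Fin 2)) (d : Fin 2)
    (h : ℝ) (h0 : 0 < h) :
    segAvg f y (y + h • ev d) * segAvg g y (y + h • ev d)
      + (h^2 / 12) * Gperp f h d y (y + h • ev d) * Gperp g h d y (y + h • ev d)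
    = Bq (fun s => f (y + s • ev d)) (fun s => g (y + s • ev d)) h
      + ∫ s in (0:ℝ)..1, f (y + (h * s) • ev d) * g (y + (h * s) • ev d) := by
  have G : ∀ k : EuclideanSpace ℝ (Fin 2) → ℝ, Gperp k h d y (y + h • ev d)
      = ((∫ s in (0:ℝ)..1, k (y + (h * s + h) • ev d))
        - ∫ s in (0:ℝ)..1, k (y + (h * s - h) • ev d)) / (2 * h) := by
    intro k
    unfold Gperp
    rw [show y + h • ev d + h • ev d = (y + h • ev d) + h • ev d from rfl, segAvg_line,
      show y + h • ev d - h • ev d = (y - h • ev d) + h • ev d by abel, segAvg_line]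
    congr 3 <;>
    · ext s
      congr 1
      module
  rw [G, G, segAvg_line, segAvg_line]
  unfold Bq
  field_simp
  ring

lemma E_eq (x : EuclideanSpace ℝ (Fin 2)) : WithLp.toLp 2 ![x 0, x 1] = x := by
  ext i; fin_cases i <;> rfl

/-- chart -/
def chart (p : ℝ × ℝ) : EuclideanSpace ℝ (Fin 2) := p.1 • ev 0 + p.2 • ev 1

lemma chart_0 (p : ℝ × ℝ) : chart p 0 = p.1 := by simp [chart, ev]
lemma chart_1 (p : ℝ × ℝ) : chart p 1 = p.2 := by simp [chart, ev]

lemma chart_eq : chart = fun p => WithLp.toLp 2 (MeasurableEquiv.finTwoArrow.symm p) := by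
  funext p
  ext i
  fin_cases i
  · exact chart_0 p
  · exact chart_1 p

lemma chart_mp : MeasurePreserving chart volume volume := by
  rw [chart_eq]
  exact (PiLp.volume_preserving_toLp (Fin 2)).comp (volume_preserving_finTwoArrow ℝ).symm

lemma chart_me : MeasurableEmbedding chart := by
  rw [chart_eq]
  exact (MeasurableEquiv.toLp 2 (Fin 2 → ℝ)).measurableEmbedding.comp
    MeasurableEquiv.finTwoArrow.symm.measurableEmbedding

lemma chart_pre (x : EuclideanSpace ℝ (Fin 2)) (h : ℝ) :
    chart ⁻¹' (fvCell x h 0) = Set.Icc (x 0, x 1) (x 0 + h, x 1 + h) := by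
  ext p
  simp only [Set.mem_preimage, fvCell, Set.mem_ofPred_eq, Fin.forall_fin_two, chart_0, chart_1,
    Set.mem_Icc, Prod.le_def]
  simp
  tauto

lemma face_int (F : ℝ → ℝ) (a h : ℝ) :
    ∫ t in a..(a + h), F t = h * ∫ s in (0:ℝ)..1, F (a + h * s) := by
  rw [intervalIntegral.mul_integral_comp_mul_left (f := fun t => F (a + t)),
    intervalIntegral.integral_comp_add_left]
  simp

lemma divergence (x : EuclideanSpace ℝ (Fin 2)) (ρ : EuclideanSpace ℝ (Fin 2) → ℝ)
    (u : EuclideanSpace ℝ (Fin 2) → EuclideanSpace ℝ (Fin 2))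
    (hρ : ContDiff ℝ 5 ρ) (hu : ∀ i, ContDiff ℝ 5 (fun y => u y i))
    (hdiv : ∀ y, ∑ i : Fin 2, fderiv ℝ (fun z => u z i) y (ev i) = 0) (h : ℝ) (h0 : 0 < h) :
    cellAvg (fun y => ∑ i : Fin 2, u y i * fderiv ℝ ρ y (ev i)) x h 0 = (1 / h) *
      (((∫ s in (0:ℝ)..1, ρ (x + h • ev 0 + (h * s) • ev 1) * u (x + h • ev 0 + (h * s) • ev 1) 0)
        - ∫ s in (0:ℝ)..1, ρ (x + (h * s) • ev 1) * u (x + (h * s) • ev 1) 0)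
      + ((∫ s in (0:ℝ)..1, ρ (x + h • ev 1 + (h * s) • ev 0) * u (x + h • ev 1 + (h * s) • ev 0) 1)
        - ∫ s in (0:ℝ)..1, ρ (x + (h * s) • ev 0) * u (x + (h * s) • ev 0) 1)) := by
  have hd : ∀ i y, HasFDerivAt (fun y => ρ y * u y i)
      (ρ y • fderiv ℝ (fun z => u z i) y + u y i • fderiv ℝ ρ y) y := fun i y =>
    (hρ.differentiable (by norm_num) y).hasFDerivAt.mul
      ((hu i).differentiable (by norm_num) y).hasFDerivAt
  let L : ℝ × ℝ →L[ℝ] EuclideanSpace ℝ (Fin 2) :=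
    (ContinuousLinearMap.fst ℝ ℝ ℝ).smulRight (ev 0) + (ContinuousLinearMap.snd ℝ ℝ ℝ).smulRight (ev 1)
  have hL : ∀ p, HasFDerivAt chart L p := fun p => L.hasFDerivAt
  have L0 : L (1, 0) = ev 0 := by simp [L]
  have L1 : L (0, 1) = ev 1 := by simp [L]
  have cc : Continuous chart := L.continuous
  have cu : ∀ i, Continuous (fun y => u y i) := fun i => (hu i).continuous
  have cρ := hρ.continuous
  have cdρ : Continuous (fderiv ℝ ρ) := hρ.continuous_fderiv (by norm_num)
  have cdu : ∀ i, Continuous (fderiv ℝ (fun y => u y i)) :=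
    fun i => (hu i).continuous_fderiv (by norm_num)
  have cF : ∀ i, Continuous (fun p => ρ (chart p) * u (chart p) i) := fun i =>
    (cρ.comp cc).mul ((cu i).comp cc)
  let D : Fin 2 → ℝ × ℝ → ℝ × ℝ →L[ℝ] ℝ := fun i p =>
    (ρ (chart p) • fderiv ℝ (fun z => u z i) (chart p) + u (chart p) i • fderiv ℝ ρ (chart p)).comp L
  have hD : ∀ i p, HasFDerivAt (fun p => ρ (chart p) * u (chart p) i) (D i p) p := fun i p =>
    (hd i (chart p)).comp p (hL p)
  have eqD : ∀ p, D 0 p (1, 0) + D 1 p (0, 1)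
      = ∑ i : Fin 2, u (chart p) i * fderiv ℝ ρ (chart p) (ev i) := by
    intro p
    have := hdiv (chart p)
    rw [Fin.sum_univ_two] at this ⊢
    simp only [D, ContinuousLinearMap.comp_apply, L0, L1, ContinuousLinearMap.add_apply,
      ContinuousLinearMap.smul_apply, smul_eq_mul]
    linear_combination (ρ (chart p)) * this
  have cD : Continuous (fun p => D 0 p (1, 0) + D 1 p (0, 1)) := by
    simp only [eqD]
    refine continuous_finset_sum _ fun i _ => ((cu i).comp cc).mul ?_
    exact (cdρ.comp cc).clm_apply continuous_const
  have main := integral_divergence_prod_Icc_of_hasFDerivAt_of_le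
    (fun p => ρ (chart p) * u (chart p) 0) (fun p => ρ (chart p) * u (chart p) 1) (D 0) (D 1)
    (x 0, x 1) (x 0 + h, x 1 + h) (Prod.mk_le_mk.2 ⟨by linarith, by linarith⟩)
    (cF 0).continuousOn (cF 1).continuousOn (fun p _ => hD 0 p) (fun p _ => hD 1 p)
    (cD.continuousOn.integrableOn_compact isCompact_Icc)
  simp only [eqD] at main
  unfold cellAvg
  rw [← chart_mp.setIntegral_preimage_emb chart_me, chart_pre, main]
  simp only [face_int]
  have hx : chart (x 0, x 1) = x := by
    ext i
    fin_cases i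
    · exact chart_0 _
    · exact chart_1 _
  have t1 : ∀ s, chart (x 0 + h * s, x 1 + h) = x + h • ev 1 + (h * s) • ev 0 := fun s => by
    conv_rhs => rw [← hx]
    simp only [chart]; module
  have t2 : ∀ s, chart (x 0 + h * s, x 1) = x + (h * s) • ev 0 := fun s => by
    conv_rhs => rw [← hx]
    simp only [chart]; module
  have t3 : ∀ s, chart (x 0 + h, x 1 + h * s) = x + h • ev 0 + (h * s) • ev 1 := fun s => by
    conv_rhs => rw [← hx]
    simp only [chart]; module
  have t4 : ∀ s, chart (x 0, x 1 + h * s) = x + (h * s) • ev 1 := fun s => by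
    conv_rhs => rw [← hx]
    simp only [chart]; module
  simp only [t1, t2, t3, t4]
  field_simp
  ring

/-- Fourth-order accuracy of the conservative advection discretization: for a
divergence-free `C⁵` velocity `u` and a `C⁵` scalar `ρ`, the sum of corrected
face fluxes over the faces of the cell `x + [0,h]²` approximates the
cell average of `u · ∇ρ` to `O(h⁴)`. -/
theorem conservative_advection_fourth_order (x : EuclideanSpace ℝ (Fin 2))
    (ρ : EuclideanSpace ℝ (Fin 2) → ℝ)
    (u : EuclideanSpace ℝ (Fin 2) → EuclideanSpace ℝ (Fin 2))
    (hρ : ContDiff ℝ 5 ρ) (hu : ContDiff ℝ 5 u)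
    (hdiv : ∀ y, ∑ i : Fin 2, fderiv ℝ (fun z => u z i) y (ev i) = 0) :
    ∃ C > (0 : ℝ), ∃ h₀ > (0 : ℝ), ∀ h : ℝ, 0 < h → h < h₀ →
      |(1 / h) * ∑ d : Fin 2,
          ((segAvg ρ (x + h • ev d) (x + h • ev d + h • ev (otherIdx d)) *
              segAvg (fun y => u y d) (x + h • ev d) (x + h • ev d + h • ev (otherIdx d))
            + (h ^ 2 / 12) *
              Gperp ρ h (otherIdx d) (x + h • ev d) (x + h • ev d + h • ev (otherIdx d)) *
              Gperp (fun y => u y d) h (otherIdx d) (x + h • ev d)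
                (x + h • ev d + h • ev (otherIdx d)))
          - (segAvg ρ x (x + h • ev (otherIdx d)) *
              segAvg (fun y => u y d) x (x + h • ev (otherIdx d))
            + (h ^ 2 / 12) *
              Gperp ρ h (otherIdx d) x (x + h • ev (otherIdx d)) *
              Gperp (fun y => u y d) h (otherIdx d) x (x + h • ev (otherIdx d))))
        - cellAvg (fun y => ∑ i : Fin 2, u y i * fderiv ℝ ρ y (ev i)) x h 0|
        ≤ C * h ^ 4 := by
  have hui : ∀ i, ContDiff ℝ 5 (fun y => u y i) := fun i => (contDiff_euclidean.1 hu) i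
  have hev : ∀ i, ‖ev i‖ = 1 := fun i => by simp [ev]
  obtain ⟨C0, hC0, H0⟩ := defect_diff x (ev 0) (ev 1) (hev 0) (hev 1) ρ (fun y => u y 0) hρ (hui 0)
  obtain ⟨C1, hC1, H1⟩ := defect_diff x (ev 1) (ev 0) (hev 1) (hev 0) ρ (fun y => u y 1) hρ (hui 1)
  refine ⟨C0 + C1 + 1, by positivity, 1, one_pos, fun h h0 h1 => ?_⟩
  rw [divergence x ρ u hρ hui hdiv h h0, Fin.sum_univ_two]
  rw [show otherIdx 0 = 1 from rfl, show otherIdx 1 = 0 from rfl]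
  rw [flux_eq _ _ _ _ h h0, flux_eq _ _ _ _ h h0, flux_eq _ _ _ _ h h0, flux_eq _ _ _ _ h h0,
    ← mul_sub, abs_mul, abs_of_pos (by positivity : 0 < 1 / h)]
  have K0 := H0 h h0 h1.le
  have K1 := H1 h h0 h1.le
  rw [one_div, inv_mul_le_iff₀ h0]
  have : 0 ≤ h^5 := by positivity
  rw [abs_le] at *
  constructor <;> nlinarith
end
end
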